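/- arXiv:1008.0763 — 5 statements merged into one kernel-verified Lean document; each statement's English description precedes it below -/
import Mathlib

section
/- For every finite abelian group G and every k ∈ ℕ₀, the k-th Olson constant equals the (k+1)-st Strong Davenport constant: Ol_k(G) = SD_{k+1}(G). -/
open Multiset

/-- A sequence (finite multiset) over `G` is zero-sumfree if every nonempty
subsequence has nonzero sum. -/
def IsZeroSumfree {G : Type*} [AddCommMonoid G] (S : Multiset G) : Prop :=
  ∀ T ≤ S, T ≠ 0 → T.sum ≠ 0

/-- A minimal zero-sum sequence: a nonempty sequence with sum zero all of whose
nonempty proper subsequences have nonzero sum. -/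
def IsMinimalZeroSum {G : Type*} [AddCommMonoid G] (S : Multiset G) : Prop :=
  S ≠ 0 ∧ S.sum = 0 ∧ ∀ T ≤ S, T ≠ 0 → T ≠ S → T.sum ≠ 0

/-- The cumulated multiplicity of level `ℓ` of a sequence:
`cm_ℓ(S) = Σ_{g ∈ G} max {0, v_g(S) − ℓ}`. -/
noncomputable def cmul {G : Type*} [AddCommMonoid G] (ℓ : ℕ) (S : Multiset G) : ℕ :=
  letI := Classical.decEq G
  ∑ g ∈ S.toFinset, (S.count g - ℓ)

/-- `SD_{(k,ℓ)}(G)`: the maximum length of a minimal zero-sum sequence `S` over `G`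
with `cm_ℓ(S) ≤ k`. -/
noncomputable def SDpair (G : Type*) [AddCommMonoid G] (k ℓ : ℕ) : ℕ :=
  sSup {m | ∃ S : Multiset G, IsMinimalZeroSum S ∧ cmul ℓ S ≤ k ∧ Multiset.card S = m}

/-- `SD_k(G)`: the `k`-th Strong Davenport constant. -/
noncomputable def SDk (G : Type*) [AddCommMonoid G] (k : ℕ) : ℕ := SDpair G k 1

/-- The Strong Davenport constant `SD(G) = SD_0(G)`. -/
noncomputable def SD (G : Type*) [AddCommMonoid G] : ℕ := SDk G 0

/-- The Olson constant `Ol(G) = SD_1(G)`. -/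
noncomputable def Ol (G : Type*) [AddCommMonoid G] : ℕ := SDk G 1

/-- `ol_k(G)`: the maximum length of a zero-sumfree sequence `S` over `G` with
`cm(S) ≤ k`. -/
noncomputable def olk (G : Type*) [AddCommMonoid G] (k : ℕ) : ℕ :=
  sSup {m | ∃ S : Multiset G, IsZeroSumfree S ∧ cmul 1 S ≤ k ∧ Multiset.card S = m}

/-- `Ol_k(G)`: the smallest integer `ℓ` such that every sequence `S` over `G` with
`cm(S) ≤ k` and `|S| ≥ ℓ` has a nonempty zero-sum subsequence. -/
noncomputable def Olk (G : Type*) [AddCommMonoid G] (k : ℕ) : ℕ :=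
  sInf {m | ∀ S : Multiset G, cmul 1 S ≤ k → m ≤ Multiset.card S →
    ∃ T, T ≤ S ∧ T ≠ 0 ∧ T.sum = 0}

/-- The Davenport constant `D(G)`: the maximum length of a minimal zero-sum
sequence over `G`. -/
noncomputable def DavenportD (G : Type*) [AddCommMonoid G] : ℕ :=
  sSup {m | ∃ S : Multiset G, IsMinimalZeroSum S ∧ Multiset.card S = m}

theorem cmul_one_add {G : Type*} [AddCommMonoid G] [DecidableEq G] (S : Multiset G) :
    cmul 1 S + S.toFinset.card = Multiset.card S := by
  have e : Classical.decEq G = (inferInstance : DecidableEq G) := Subsingleton.elim _ _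
  unfold cmul
  rw [e]
  change ∑ g ∈ S.toFinset, (S.count g - 1) + S.toFinset.card = Multiset.card S
  rw [Finset.card_eq_sum_ones, ← Finset.sum_add_distrib, ← Multiset.toFinset_sum_count_eq S]
  refine Finset.sum_congr rfl fun g hg => ?_
  have := Multiset.count_pos.2 (Multiset.mem_toFinset.1 hg)
  omega

/-- Adjoining the negative of the sum to a zero-sumfree sequence. -/
theorem minimal_of_zeroSumfree {G : Type*} [AddCommGroup G] (S : Multiset G)
    (hS : ∀ T, T ≤ S → T ≠ 0 → T.sum ≠ 0) : IsMinimalZeroSum ((-S.sum) ::ₘ S) := by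
  classical
  refine ⟨Multiset.cons_ne_zero, by simp, fun T hT h0 hne hsum => ?_⟩
  by_cases hle : T ≤ S
  · exact hS T hle h0 hsum
  · -- the complement of `T` is a nonempty subsequence of `S` with sum zero
    obtain ⟨U, hU⟩ := Multiset.le_iff_exists_add.1 hT
    have hmem : (-S.sum) ∈ T := by
      by_contra hn
      exact hle ((Multiset.le_cons_of_notMem hn).1 hT)
    obtain ⟨V, rfl⟩ := Multiset.exists_cons_of_mem hmem
    rw [Multiset.cons_add, Multiset.cons_inj_right] at hU
    have hUS : U ≤ S := hU ▸ Multiset.le_add_left U V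
    refine hS U hUS (fun hU0 => hne ?_) ?_
    · subst hU0
      rw [add_zero] at hU
      rw [← hU]
    · have h1 : S.sum = V.sum + U.sum := by
        conv_lhs => rw [hU]
        exact Multiset.sum_add V U
      rw [Multiset.sum_cons, h1] at hsum
      have h2 : -(V.sum + U.sum) + V.sum = -U.sum := by abel
      rw [h2] at hsum
      exact neg_eq_zero.1 hsum

/-- For every finite abelian group `G` and every `k ∈ ℕ₀`,
`Ol_k(G) = SD_{k+1}(G)`. -/
theorem olson_eq_strong_davenport_succ (G : Type*) [AddCommGroup G] [Fintype G] (k : ℕ) :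
    Olk G k = SDk G (k + 1) := by
  classical
  unfold Olk SDk SDpair
  set A := {m | ∃ S : Multiset G, IsMinimalZeroSum S ∧ cmul 1 S ≤ k + 1 ∧ Multiset.card S = m}
    with hA
  have hbdd : BddAbove A := by
    refine ⟨k + 1 + Fintype.card G, ?_⟩
    rintro m ⟨S, -, hc, rfl⟩
    have h1 := cmul_one_add S
    have h2 := Finset.card_le_univ S.toFinset
    omega
  have hmem : sSup A ∈ {m | ∀ S : Multiset G, cmul 1 S ≤ k → m ≤ Multiset.card S →
      ∃ T, T ≤ S ∧ T ≠ 0 ∧ T.sum = 0} := by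
    intro S hc hm
    by_contra! hcon
    have hle : Multiset.card S + 1 ≤ sSup A := by
      refine le_csSup hbdd ⟨(-S.sum) ::ₘ S, minimal_of_zeroSumfree S hcon, ?_, by simp⟩
      have h1 := cmul_one_add S
      have h2 := cmul_one_add ((-S.sum) ::ₘ S)
      have h3 : S.toFinset.card ≤ ((-S.sum) ::ₘ S).toFinset.card :=
        Finset.card_le_card (by simp)
      rw [Multiset.card_cons] at h2
      omega
    omega
  apply le_antisymm
  · exact Nat.sInf_le hmem
  · refine csSup_le ⟨1, {0}, minimal_of_zeroSumfree (G := G) 0 ?_ |> fun h => by simpa using h,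
      ?_, by simp⟩ ?_
    · intro T hT h0
      exact absurd (Multiset.le_zero.1 hT) h0
    · have h1 := cmul_one_add ({0} : Multiset G)
      simp at h1
      omega
    rintro _ ⟨T, ⟨hT0, -, hmin⟩, hc, rfl⟩
    refine le_csInf ⟨_, hmem⟩ fun m hm => ?_
    by_contra! hlt
    -- choose a suitable element to remove
    obtain ⟨g, hg, hcg⟩ : ∃ g ∈ T, cmul 1 (T.erase g) ≤ k := by
      have h1 := cmul_one_add T
      by_cases hnd : T.Nodup
      · obtain ⟨g, hg⟩ := Multiset.exists_mem_of_ne_zero hT0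
        refine ⟨g, hg, ?_⟩
        have h2 := cmul_one_add (T.erase g)
        rw [Multiset.toFinset_card_of_nodup (hnd.erase g)] at h2
        omega
      · rw [Multiset.nodup_iff_count_le_one] at hnd
        push Not at hnd
        obtain ⟨g, hg⟩ := hnd
        have hgT : g ∈ T := Multiset.count_pos.1 (by omega)
        refine ⟨g, hgT, ?_⟩
        have h2 := cmul_one_add (T.erase g)
        have h3 : T.toFinset.card ≤ (T.erase g).toFinset.card := by
          refine Finset.card_le_card fun x hx => ?_
          rw [Multiset.mem_toFinset] at hx ⊢
          by_cases hxg : x = g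
          · subst hxg
            rw [← Multiset.count_pos, Multiset.count_erase_self]
            omega
          · exact (Multiset.mem_erase_of_ne hxg).2 hx
        have h4 := Multiset.card_erase_add_one hgT
        omega
    have h4 := Multiset.card_erase_add_one hg
    obtain ⟨U, hU, hU0, hUs⟩ := hm (T.erase g) hcg (by omega)
    refine hmin U (hU.trans (Multiset.erase_le g T)) hU0 (fun he => ?_) hUs
    have := Multiset.card_le_card hU
    rw [he] at this
    omega
end

section
/- Let n, ℓ ∈ ℕ and k ∈ ℕ₀. (1) If k + ℓ ≥ n, then SD_{(k,ℓ)}(C_n) = n. (2) If k ≤ n − 1 and d = ⌊(−1 + √(1 + 8(n−k)/ℓ))/2⌋ (real square root and real division, then integer floor), then SD_{(k,ℓ)}(C_n) ≥ k + ℓ·d + ⌊(n−k)/(d+1) − ℓ·d/2⌋; in particular, SD_{(k,1)}(C_n) ≥ k + ⌊(−1 + √(1 + 8(n−k)))/2⌋. -/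
open Multiset

theorem aux_card_le (n : ℕ) (hn : 1 ≤ n) (S : Multiset (ZMod n)) (hS : IsMinimalZeroSum S) :
    Multiset.card S ≤ n := by
  classical
  haveI : NeZero n := ⟨by omega⟩
  by_contra hlt
  push Not at hlt
  obtain ⟨L, rfl⟩ : ∃ L : List (ZMod n), S = (L : Multiset (ZMod n)) :=
    ⟨S.toList, (Multiset.coe_toList S).symm⟩
  rw [Multiset.coe_card] at hlt
  have hp : ∃ x ∈ Finset.range (n + 1), ∃ y ∈ Finset.range (n + 1), x ≠ y ∧
      (L.take x).sum = (L.take y).sum := by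
    apply Finset.exists_ne_map_eq_of_card_lt_of_maps_to (t := (Finset.univ : Finset (ZMod n)))
    · simp [ZMod.card]
    · intro x _
      simp
  have key : ∀ x y : ℕ, x < y → y ≤ n → (L.take x).sum = (L.take y).sum → False := by
    intro x y hxy hy he
    have h1 : L.take y = L.take x ++ (L.take y).drop x := by
      conv_lhs => rw [← List.take_append_drop x (L.take y)]
      rw [List.take_take, min_eq_left hxy.le]
    have h2 : ((L.take y).drop x).sum = 0 := by
      have h3 := congrArg List.sum h1
      rw [List.sum_append, he] at h3
      exact left_eq_add.mp h3
    have hlen : ((L.take y).drop x).length = y - x := by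
      rw [List.length_drop, List.length_take]; omega
    refine hS.2.2 (((L.take y).drop x : List (ZMod n)) : Multiset (ZMod n)) ?_ ?_ ?_ ?_
    · exact Multiset.coe_le.mpr
        (((List.drop_sublist _ _).trans (List.take_sublist _ _)).subperm)
    · intro h
      have := congrArg Multiset.card h
      rw [Multiset.coe_card, hlen, Multiset.card_zero] at this
      omega
    · intro h
      have := congrArg Multiset.card h
      rw [Multiset.coe_card, hlen, Multiset.coe_card] at this
      omega
    · simpa using h2
  obtain ⟨x, hx, y, hy, hxy, he⟩ := hp
  rw [Finset.mem_range] at hx hy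
  rcases lt_or_gt_of_ne hxy with h | h
  · exact key x y h (by omega) he
  · exact key y x h (by omega) he.symm

theorem aux_bdd (n k ℓ : ℕ) (hn : 1 ≤ n) :
    BddAbove {m | ∃ S : Multiset (ZMod n), IsMinimalZeroSum S ∧ cmul ℓ S ≤ k ∧
      Multiset.card S = m} :=
  ⟨n, by rintro m ⟨S, hS, _, rfl⟩; exact aux_card_le n hn S hS⟩

theorem aux_sum_pos (T : Multiset ℕ) (hT : T ≠ 0) (hp : ∀ x ∈ T, 1 ≤ x) : 0 < T.sum := by
  obtain ⟨a, ha⟩ := Multiset.exists_mem_of_ne_zero hT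
  exact lt_of_lt_of_le (hp a ha) (Multiset.le_sum_of_mem ha)

theorem aux_minimal (n : ℕ) (hn : 1 ≤ n) (S : Multiset ℕ) (hp : ∀ x ∈ S, 1 ≤ x)
    (hs : S.sum = n) : IsMinimalZeroSum (S.map (Nat.cast : ℕ → ZMod n)) := by
  have hsum : ∀ T : Multiset ℕ, (T.map (Nat.cast : ℕ → ZMod n)).sum = ((T.sum : ℕ) : ZMod n) := by
    intro T
    exact (map_multiset_sum (Nat.castAddMonoidHom (ZMod n)) T).symm
  refine ⟨?_, ?_, ?_⟩
  · intro h
    rw [Multiset.map_eq_zero] at h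
    subst h
    simp at hs
    omega
  · rw [hsum, hs]; simp
  · intro T hT h0 hne hz
    obtain ⟨T', hT', rfl⟩ : ∃ T' ≤ S, T'.map (Nat.cast : ℕ → ZMod n) = T := by
      induction S using Quotient.inductionOn
      induction T using Quotient.inductionOn
      obtain ⟨l, hl1, hl2⟩ := hT
      obtain ⟨l', hl', rfl⟩ := List.sublist_map_iff.mp hl2
      exact ⟨(l' : Multiset ℕ), Multiset.coe_le.mpr hl'.subperm, by
        simpa using hl1⟩
    rw [hsum, ZMod.natCast_eq_zero_iff] at hz
    obtain ⟨U, rfl⟩ := Multiset.le_iff_exists_add.mp hT'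
    have hT0 : T' ≠ 0 := by rintro rfl; simp at h0
    have hU0 : U ≠ 0 := by rintro rfl; simp at hne
    have h1 := aux_sum_pos T' hT0 (fun x hx => hp x (Multiset.mem_add.mpr (Or.inl hx)))
    have h2 := aux_sum_pos U hU0 (fun x hx => hp x (Multiset.mem_add.mpr (Or.inr hx)))
    rw [Multiset.sum_add] at hs
    have := Nat.le_of_dvd h1 hz
    omega

theorem aux_cmul {G : Type*} [AddCommMonoid G] (ℓ k : ℕ) (A B : Multiset G)
    (hA : Multiset.card A ≤ k)
    (hB : ∀ g, @Multiset.count G (Classical.decEq G) g B ≤ ℓ) : cmul ℓ (A + B) ≤ k := by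
  letI := Classical.decEq G
  unfold cmul
  calc ∑ g ∈ (A + B).toFinset, ((A + B).count g - ℓ)
      ≤ ∑ g ∈ (A + B).toFinset, A.count g := by
        apply Finset.sum_le_sum
        intro g _
        have := hB g
        rw [Multiset.count_add]
        omega
    _ = Multiset.card A := by
        apply Multiset.sum_count_eq_card
        intro a ha
        simp [ha]
    _ ≤ k := hA

theorem aux_core (n k ℓ : ℕ) (hn : 1 ≤ n) (A B : Multiset ℕ)
    (hA : Multiset.card A ≤ k) (hB : ∀ g, B.count g ≤ ℓ)
    (hpA : ∀ x ∈ A, 1 ≤ x) (hpB : ∀ x ∈ B, 1 ≤ x) (hs : (A + B).sum = n) :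
    Multiset.card A + Multiset.card B ≤ SDpair (ZMod n) k ℓ := by
  apply le_csSup (aux_bdd n k ℓ hn)
  refine ⟨(A + B).map (Nat.cast : ℕ → ZMod n), aux_minimal n hn _ ?_ hs, ?_, by simp⟩
  · intro x hx
    rcases Multiset.mem_add.mp hx with h | h
    · exact hpA x h
    · exact hpB x h
  · rw [Multiset.map_add]
    apply aux_cmul
    · simpa using hA
    · intro g
      letI := Classical.decEq (ZMod n)
      by_cases hg : g ∈ B.map (Nat.cast : ℕ → ZMod n)
      · obtain ⟨x, hx, rfl⟩ := Multiset.mem_map.mp hg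
        have hle : ∀ y ∈ B, y ≤ n := by
          intro y hy
          have := Multiset.le_sum_of_mem hy
          rw [Multiset.sum_add] at hs
          omega
        have hinj : Set.InjOn (Nat.cast : ℕ → ZMod n) {x | x ∈ B} := by
          intro a ha b hb hab
          have ha1 := hpB a ha
          have hb1 := hpB b hb
          have ha2 := hle a ha
          have hb2 := hle b hb
          have hab' := (ZMod.natCast_eq_natCast_iff _ _ _).mp hab
          rcases le_total a b with h | h
          · have hd := (Nat.modEq_iff_dvd' h).mp hab'
            by_contra hne
            have := Nat.le_of_dvd (by omega) hd
            omega
          · have hd := (Nat.modEq_iff_dvd' h).mp hab'.symm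
            by_contra hne
            have := Nat.le_of_dvd (by omega) hd
            omega
        have := Multiset.count_map_eq_count (Nat.cast : ℕ → ZMod n) B hinj x hx
        exact le_of_eq_of_le this (hB x)
      · exact le_of_eq_of_le (Multiset.count_eq_zero_of_notMem hg) (Nat.zero_le _)

theorem aux_core2 (n k ℓ : ℕ) (hℓ : 1 ≤ ℓ) (hk : k < n) (B : Multiset ℕ)
    (hB : ∀ g, B.count g ≤ ℓ) (hpB : ∀ x ∈ B, 1 ≤ x) (hs : k + B.sum ≤ n) :
    k + Multiset.card B ≤ SDpair (ZMod n) k ℓ := by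
  have hA : ∀ x ∈ Multiset.replicate k 1, 1 ≤ x := by
    intro x hx
    rw [Multiset.eq_of_mem_replicate hx]
  by_cases h0 : B = 0
  · subst h0
    have := aux_core n k ℓ (by omega) (Multiset.replicate k 1) {n - k} (by simp)
      (by
        intro g
        rw [Multiset.count_singleton]
        split_ifs <;> omega) hA
      (by
        intro x hx
        rw [Multiset.mem_singleton] at hx
        omega)
      (by simp; omega)
    simp at this ⊢
    omega
  · obtain ⟨M, hM, hmax⟩ : ∃ M ∈ B, ∀ x ∈ B, x ≤ M := by
      obtain ⟨M, hM, h⟩ := Finset.exists_max_image B.toFinset id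
        (by simpa [Finset.nonempty_iff_ne_empty] using h0)
      exact ⟨M, by simpa using hM, fun x hx => h x (by simpa using hx)⟩
    obtain ⟨B', rfl⟩ := Multiset.exists_cons_of_mem hM
    rw [Multiset.sum_cons] at hs
    obtain ⟨r, hr⟩ := Nat.exists_eq_add_of_le hs
    have := aux_core n k ℓ (by omega) (Multiset.replicate k 1) ((M + r) ::ₘ B') (by simp)
      (by
        intro g
        have hg := hB g
        rw [Multiset.count_cons] at hg ⊢
        by_cases hgM : g = M + r
        · by_cases hr0 : r = 0
          · subst hr0; simpa using hg
          · have : B'.count g = 0 := by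
              apply Multiset.count_eq_zero_of_notMem
              intro hmem
              have := hmax g (Multiset.mem_cons_of_mem hmem)
              omega
            rw [this]
            split_ifs <;> omega
        · rw [if_neg hgM]
          omega) hA
      (by
        intro x hx
        rcases Multiset.mem_cons.mp hx with h | h
        · have := hpB M hM
          omega
        · exact hpB x (Multiset.mem_cons_of_mem h))
      (by simp; omega)
    simp at this ⊢
    omega

theorem aux_nat (n k ℓ d q : ℕ) (hℓ : 1 ≤ ℓ) (hk : k < n) (hq : q ≤ ℓ)
    (h : ℓ * d * (d + 1) + 2 * q * (d + 1) ≤ 2 * (n - k)) :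
    k + ℓ * d + q ≤ SDpair (ZMod n) k ℓ := by
  have hcount : ∀ (e g : ℕ), (∑ i ∈ Finset.range e, Multiset.replicate ℓ (i + 1)).count g
      = if 1 ≤ g ∧ g ≤ e then ℓ else 0 := by
    intro e g
    induction e with
    | zero => simp; omega
    | succ e ih =>
      rw [Finset.sum_range_succ, Multiset.count_add, ih, Multiset.count_replicate]
      split_ifs <;> omega
  have hsum : ∀ e : ℕ, 2 * (∑ i ∈ Finset.range e, Multiset.replicate ℓ (i + 1)).sum
      = ℓ * e * (e + 1) := by
    intro e
    induction e with
    | zero => simp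
    | succ e ih =>
      rw [Finset.sum_range_succ, Multiset.sum_add, mul_add, ih, Multiset.sum_replicate]
      simp
      ring
  have hcard : Multiset.card (∑ i ∈ Finset.range d, Multiset.replicate ℓ (i + 1)) = ℓ * d := by
    rw [Multiset.card_sum]; simp [mul_comm]
  have := aux_core2 n k ℓ hℓ hk
    ((∑ i ∈ Finset.range d, Multiset.replicate ℓ (i + 1)) + Multiset.replicate q (d + 1))
    (by
      intro g
      rw [Multiset.count_add, hcount, Multiset.count_replicate]
      split_ifs <;> omega)
    (by
      intro x hx
      rcases Multiset.mem_add.mp hx with h | h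
      · by_contra hx0
        have h1 := Multiset.count_pos.mpr h
        rw [hcount, if_neg (by omega)] at h1
        omega
      · have := Multiset.eq_of_mem_replicate h
        omega)
    (by
      have h1 := hsum d
      rw [Multiset.sum_add, Multiset.sum_replicate, smul_eq_mul]
      have h2 : 2 * q * (d + 1) = 2 * (q * (d + 1)) := by ring
      omega)
  rw [Multiset.card_add, hcard, Multiset.card_replicate] at this
  omega

/-- Arithmetic facts on the floor expression. -/
theorem aux_floor (m ℓ : ℝ) (hm : 0 < m) (hℓ : 0 < ℓ) (d : ℤ)
    (hd : d = ⌊(-1 + Real.sqrt (1 + 8 * m / ℓ)) / 2⌋) :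
    0 ≤ d ∧ ℓ * d * (d + 1) ≤ 2 * m ∧ 2 * m < ℓ * (d + 1) * (d + 2) := by
  have hx : 0 < 8 * m / ℓ := by positivity
  have hs := Real.sq_sqrt (show 0 ≤ 1 + 8 * m / ℓ by linarith)
  have hs1 : 1 ≤ Real.sqrt (1 + 8 * m / ℓ) := Real.one_le_sqrt.mpr (by linarith)
  set s := Real.sqrt (1 + 8 * m / ℓ)
  have hd0 : 0 ≤ d := by
    rw [hd]; apply Int.floor_nonneg.mpr; linarith
  have h1 : (d : ℝ) ≤ (-1 + s) / 2 := by rw [hd]; exact Int.floor_le _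
  have h2 : (-1 + s) / 2 < (d : ℝ) + 1 := by rw [hd]; exact Int.lt_floor_add_one _
  have hd0' : (0 : ℝ) ≤ d := by exact_mod_cast hd0
  have hms : 8 * m = ℓ * (s ^ 2 - 1) := by
    rw [hs]; field_simp; ring
  refine ⟨hd0, ?_, ?_⟩
  · have : 4 * ((d : ℝ) * (d + 1)) ≤ s ^ 2 - 1 := by nlinarith
    nlinarith
  · have : s ^ 2 - 1 < 4 * (((d : ℝ) + 1) * (d + 2)) := by nlinarith
    nlinarith

/-- Lower bounds for `SD_{(k,ℓ)}(C_n)`: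
(1) if `k + ℓ ≥ n`, then `SD_{(k,ℓ)}(C_n) = n`;
(2) if `k ≤ n − 1` and `d = ⌊(−1 + √(1 + 8(n−k)/ℓ))/2⌋`, then
`SD_{(k,ℓ)}(C_n) ≥ k + ℓ·d + ⌊(n−k)/(d+1) − ℓ·d/2⌋`; in particular
`SD_{(k,1)}(C_n) ≥ k + ⌊(−1 + √(1 + 8(n−k)))/2⌋`. -/
theorem SDpair_cyclic_bounds (n ℓ k : ℕ) (hn : 1 ≤ n) (hℓ : 1 ≤ ℓ) :
    (n ≤ k + ℓ → SDpair (ZMod n) k ℓ = n) ∧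
    (k ≤ n - 1 → ∀ d : ℤ,
      d = ⌊(-1 + Real.sqrt (1 + 8 * ((n : ℝ) - k) / ℓ)) / 2⌋ →
      (k : ℤ) + (ℓ : ℤ) * d +
          ⌊((n : ℝ) - k) / ((d : ℝ) + 1) - (ℓ : ℝ) * (d : ℝ) / 2⌋ ≤
        (SDpair (ZMod n) k ℓ : ℤ)) ∧
    (k ≤ n - 1 →
      (k : ℤ) + ⌊(-1 + Real.sqrt (1 + 8 * ((n : ℝ) - k))) / 2⌋ ≤
        (SDpair (ZMod n) k 1 : ℤ)) := by
  refine ⟨?_, ?_, ?_⟩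
  · intro h
    apply le_antisymm
    · apply csSup_le'
      rintro m ⟨S, hS, _, rfl⟩
      exact aux_card_le n hn S hS
    · have := aux_core n k ℓ hn (Multiset.replicate (n - ℓ) 1)
        (Multiset.replicate (n - (n - ℓ)) 1) (by simp; omega)
        (by
          intro g
          rw [Multiset.count_replicate]
          split_ifs <;> omega)
        (fun x hx => (Multiset.eq_of_mem_replicate hx).ge)
        (fun x hx => (Multiset.eq_of_mem_replicate hx).ge)
        (by simp)
      rw [Multiset.card_replicate, Multiset.card_replicate] at this
      omega
  · intro hk d hd
    have hkn : k < n := by omega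
    have hm : (0 : ℝ) < (n : ℝ) - k := by
      have : (k : ℝ) < n := by exact_mod_cast hkn
      linarith
    have hl : (0 : ℝ) < ℓ := by exact_mod_cast hℓ
    obtain ⟨h0, h1, h2⟩ := aux_floor _ _ hm hl d hd
    obtain ⟨e, rfl⟩ := Int.eq_ofNat_of_zero_le h0
    rw [Int.cast_natCast] at h1 h2 ⊢
    have he : (0 : ℝ) < (e : ℝ) + 1 := by positivity
    have hq0 : 0 ≤ ⌊((n : ℝ) - k) / ((e : ℝ) + 1) - (ℓ : ℝ) * (e : ℝ) / 2⌋ := by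
      apply Int.floor_nonneg.mpr
      rw [sub_nonneg, le_div_iff₀ he]
      linarith
    obtain ⟨q, hq⟩ := Int.eq_ofNat_of_zero_le hq0
    have hqle := Int.floor_le (((n : ℝ) - k) / ((e : ℝ) + 1) - (ℓ : ℝ) * (e : ℝ) / 2)
    rw [hq] at hqle ⊢
    rw [Int.cast_natCast, le_sub_iff_add_le, le_div_iff₀ he] at hqle
    have hqℓ : q ≤ ℓ := by
      have : (q : ℝ) ≤ ℓ := by
        by_contra hc
        push Not at hc
        nlinarith
      exact_mod_cast this
    have hfin : ℓ * e * (e + 1) + 2 * q * (e + 1) ≤ 2 * (n - k) := by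
      have : ((ℓ * e * (e + 1) + 2 * q * (e + 1) : ℕ) : ℝ) ≤ ((2 * (n - k) : ℕ) : ℝ) := by
        push_cast [Nat.cast_sub hkn.le]
        linarith
      exact_mod_cast this
    exact_mod_cast aux_nat n k ℓ e q hℓ hkn hqℓ hfin
  · intro hk
    have hkn : k < n := by omega
    have hm : (0 : ℝ) < (n : ℝ) - k := by
      have : (k : ℝ) < n := by exact_mod_cast hkn
      linarith
    obtain ⟨h0, h1, -⟩ := aux_floor _ 1 hm one_pos
      ⌊(-1 + Real.sqrt (1 + 8 * ((n : ℝ) - k))) / 2⌋ (by rw [div_one])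
    obtain ⟨e, he⟩ := Int.eq_ofNat_of_zero_le h0
    rw [he] at h1 ⊢
    rw [Int.cast_natCast] at h1
    have hfin : 1 * e * (e + 1) + 2 * 0 * (e + 1) ≤ 2 * (n - k) := by
      have : ((1 * e * (e + 1) + 2 * 0 * (e + 1) : ℕ) : ℝ) ≤ ((2 * (n - k) : ℕ) : ℝ) := by
        push_cast [Nat.cast_sub hkn.le]
        linarith
      exact_mod_cast this
    have := aux_nat n k 1 e 0 le_rfl hkn (by omega) hfin
    rw [one_mul, add_zero] at this
    exact_mod_cast this
end

section
/- Let G be a finite abelian group, g ∈ G, and k ∈ [1, |G| − 1]. If it is not the case that all three of the following hold — exp(G) = 2, k ∈ {2, |G| − 2}, and g = 0 — then there exists a subset S ⊆ G with |S| = k whose elements sum to g. -/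
open Multiset

theorem aux_good_set (G : Type*) [AddCommGroup G] [Fintype G] [DecidableEq G]
    (m : ℕ) (hm : 2 ≤ m) (hm2 : m ≤ Fintype.card G) :
    ∃ T : Finset G, T.card = m ∧ ∀ x ∈ T, ∃ y ∈ T, y ≠ x ∧
      (Finset.univ.filter (fun z : G => z + z = x + y)).card ≤ 1 := by
  by_cases hs : Function.Surjective (fun z : G => z + z)
  · have hi : Function.Injective (fun z : G => z + z) := Finite.injective_iff_surjective.2 hs
    obtain ⟨T, -, hT⟩ := Finset.exists_subset_card_eq (s := (Finset.univ : Finset G)) (n := m)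
      (by simpa using hm2)
    refine ⟨T, hT, fun x hx => ?_⟩
    obtain ⟨y, hy, hyx⟩ := Finset.exists_mem_ne (s := T) (by omega) x
    refine ⟨y, hy, hyx, ?_⟩
    rw [Finset.card_le_one]
    intro a ha b hb
    simp only [Finset.mem_filter, Finset.mem_univ, true_and] at ha hb
    exact hi (ha.trans hb.symm)
  · simp only [Function.Surjective, not_forall, not_exists] at hs
    obtain ⟨c, hc⟩ := hs
    have hc0 : c ≠ 0 := fun h => hc 0 (by simp [h])
    obtain ⟨T, hT1, -, hT⟩ := Finset.exists_subsuperset_card_eq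
      (s := ({0, c} : Finset G)) (t := Finset.univ) (n := m) (Finset.subset_univ _)
      (by rw [Finset.card_pair hc0.symm]; exact hm) (by simpa using hm2)
    have h0 : (0 : G) ∈ T := hT1 (by simp)
    have hcT : c ∈ T := hT1 (by simp)
    refine ⟨T, hT, fun x hx => ?_⟩
    by_cases hx2 : ∃ w, w + w = x
    · obtain ⟨w, rfl⟩ := hx2
      refine ⟨c, hcT, fun h => hc w h.symm, ?_⟩
      rw [Finset.filter_false_of_mem]
      · simp
      · intro z _ hz
        refine hc (z - w) ?_
        have : (z - w) + (z - w) = (z + z) - (w + w) := by abel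
        simp only [this, hz]
        abel
    · refine ⟨0, h0, ?_, ?_⟩
      · rintro rfl
        exact hx2 ⟨0, by simp⟩
      · rw [Finset.filter_false_of_mem]
        · simp
        · intro z _ hz
          exact hx2 ⟨z, by simpa using hz⟩

theorem aux_mid (G : Type*) [AddCommGroup G] [Fintype G] [DecidableEq G]
    (g : G) (k : ℕ) (hk : 3 ≤ k) (hk2 : 2 * k < Fintype.card G + 3)
    (hk3 : k ≤ Fintype.card G) :
    ∃ S : Finset G, S.card = k ∧ ∑ x ∈ S, x = g := by
  by_contra hcon
  have key : ∀ T : Finset G, T.card = k - 1 → g - ∑ x ∈ T, x ∈ T := by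
    intro T hT
    by_contra hn
    refine hcon ⟨insert (g - ∑ x ∈ T, x) T, ?_, ?_⟩
    · rw [Finset.card_insert_of_notMem hn]; omega
    · rw [Finset.sum_insert hn]; abel
  obtain ⟨T, hT, hgood⟩ := aux_good_set G (k - 1) (by omega) (by omega)
  have hx := key T hT
  obtain ⟨x, hxe⟩ : ∃ x, x = g - ∑ x ∈ T, x := ⟨_, rfl⟩
  rw [← hxe] at hx
  obtain ⟨y, hy, hyx, hcard⟩ := hgood x hx
  have hsub : Tᶜ ⊆ ((T.erase y).erase x).image (fun w => x + y - w) ∪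
      Finset.univ.filter (fun z : G => z + z = x + y) := by
    intro z hz
    rw [Finset.mem_compl] at hz
    have hz' : z ∉ T.erase y := fun h => hz (Finset.mem_of_mem_erase h)
    have h1 := key (insert z (T.erase y)) (by
      rw [Finset.card_insert_of_notMem hz', Finset.card_erase_of_mem hy]; omega)
    have h2 : g - ∑ x ∈ insert z (T.erase y), x = x + y - z := by
      rw [Finset.sum_insert hz', hxe, ← Finset.add_sum_erase T (fun x => x) hy]
      abel
    rw [h2, Finset.mem_insert] at h1
    rw [Finset.mem_union]
    rcases h1 with h1 | h1
    · right
      simp only [Finset.mem_filter, Finset.mem_univ, true_and]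
      exact (sub_eq_iff_eq_add.1 h1).symm
    · left
      rw [Finset.mem_image]
      refine ⟨x + y - z, Finset.mem_erase.2 ⟨?_, h1⟩, by abel⟩
      intro h
      have : z = y := by
        have h3 : x + y = x + z := sub_eq_iff_eq_add.1 h
        exact (add_left_cancel h3).symm
      exact hz (this ▸ hy)
  have c1 := Finset.card_le_card hsub
  have c2 := Finset.card_union_le (((T.erase y).erase x).image (fun w => x + y - w))
    (Finset.univ.filter (fun z : G => z + z = x + y))
  have c3 : (((T.erase y).erase x).image (fun w => x + y - w)).card ≤ _ := Finset.card_image_le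
  rw [Finset.card_erase_of_mem (Finset.mem_erase.2 ⟨hyx.symm, hx⟩),
    Finset.card_erase_of_mem hy] at c3
  rw [Finset.card_compl] at c1
  omega

theorem aux_low (G : Type*) [AddCommGroup G] [Fintype G] [DecidableEq G]
    (g : G) (k : ℕ) (hk : 1 ≤ k) (hk2 : 2 * k ≤ Fintype.card G)
    (h : k = 2 → ¬ ((∀ x : G, x + x = 0) ∧ g = 0)) :
    ∃ S : Finset G, S.card = k ∧ ∑ x ∈ S, x = g := by
  rcases Nat.lt_or_ge k 3 with h3 | h3
  · obtain rfl | rfl : k = 1 ∨ k = 2 := by omega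
    · exact ⟨{g}, by simp, by simp⟩
    · have : ∃ x : G, x + x ≠ g := by
        by_contra hc
        push Not at hc
        have hg : g = 0 := by simpa using (hc 0).symm
        exact h rfl ⟨fun x => (hc x).trans hg, hg⟩
      obtain ⟨x, hx⟩ := this
      have hne : x ≠ g - x := fun h => hx (eq_sub_iff_add_eq.1 h)
      exact ⟨{x, g - x}, Finset.card_pair hne, by rw [Finset.sum_pair hne]; abel⟩
  · exact aux_mid G g k h3 (by omega) (by omega)

theorem aux_sum_zero (G : Type*) [AddCommGroup G] [Fintype G] [DecidableEq G]
    (h2 : ∀ x : G, x + x = 0) (hc : 3 ≤ Fintype.card G) : ∑ x : G, x = 0 := by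
  by_contra hs
  obtain ⟨a, ha⟩ : ∃ a : G, a ∉ ({0, ∑ x : G, x} : Finset G) := by
    by_contra hcon
    push Not at hcon
    have h1 : (Finset.univ : Finset G) ⊆ {0, ∑ x : G, x} := fun a _ => hcon a
    have h3 := Finset.card_le_card h1
    have h4 := Finset.card_le_two (a := (0 : G)) (b := ∑ x : G, x)
    rw [Finset.card_univ] at h3
    omega
  simp only [Finset.mem_insert, Finset.mem_singleton, not_or] at ha
  have hz : ∑ x : G, (QuotientAddGroup.mk' (AddSubgroup.zmultiples a)) x = 0 := by
    refine Finset.sum_involution (fun x _ => x + a) ?_ ?_ ?_ ?_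
    · intro x _
      rw [← _root_.map_add, ← add_assoc, h2, zero_add]
      simp
    · intro x _ _ h
      exact ha.1 (by simpa using h)
    · intro x _
      exact Finset.mem_univ _
    · intro x _
      rw [add_assoc, h2, add_zero]
  rw [← _root_.map_sum, QuotientAddGroup.mk'_apply, QuotientAddGroup.eq_zero_iff,
    AddSubgroup.mem_zmultiples_iff] at hz
  obtain ⟨n, hn⟩ := hz
  rcases Int.even_or_odd' n with ⟨r, rfl | rfl⟩
  · apply hs
    rw [← hn, mul_comm, mul_smul, two_zsmul, h2, smul_zero]
  · apply ha.2
    rw [← hn, add_smul, mul_comm, mul_smul, two_zsmul, h2, smul_zero, one_smul, zero_add]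

/-- Let `G` be a finite abelian group, `g ∈ G` and `k ∈ [1, |G| − 1]`. If it is
not the case that `exp(G) = 2`, `k ∈ {2, |G| − 2}` and `g = 0` all hold, then
there is a subset `S ⊆ G` with `|S| = k` whose elements sum to `g`. -/
theorem exists_subset_card_sum_eq (G : Type*) [AddCommGroup G] [Fintype G]
    (g : G) (k : ℕ) (hk1 : 1 ≤ k) (hk2 : k ≤ Fintype.card G - 1)
    (h : ¬(AddMonoid.exponent G = 2 ∧ (k = 2 ∨ k = Fintype.card G - 2) ∧ g = 0)) :
    ∃ S : Finset G, S.card = k ∧ ∑ x ∈ S, x = g := by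
  classical
  have hexp : (∀ x : G, x + x = 0) → AddMonoid.exponent G = 2 := by
    intro h2
    have hd : AddMonoid.exponent G ∣ 2 :=
      AddMonoid.exponent_dvd_of_forall_nsmul_eq_zero fun x => by rw [two_nsmul, h2]
    rcases (Nat.dvd_prime Nat.prime_two).1 hd with h1 | h1
    · have hss := AddMonoid.exp_eq_one_iff.1 h1
      have := Fintype.card_le_one_iff_subsingleton.2 hss
      omega
    · exact h1
  rcases Nat.lt_or_ge (Fintype.card G) (2 * k) with hlt | hle
  · obtain ⟨S, hS, hsum⟩ := aux_low G (∑ x : G, x - g) (Fintype.card G - k) (by omega) (by omega)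
      (by
        rintro hk ⟨h2, h0⟩
        rw [aux_sum_zero G h2 (by omega)] at h0
        exact h ⟨hexp h2, Or.inr (by omega), by simpa using h0⟩)
    refine ⟨Sᶜ, by rw [Finset.card_compl]; omega, ?_⟩
    have := Finset.sum_add_sum_compl S (fun x => x)
    rw [hsum] at this
    rw [← sub_eq_iff_eq_add'.2 this.symm]
    abel
  · exact aux_low G g k hk1 hle fun hk hh => h ⟨hexp hh.1, Or.inl hk, hh.2⟩
end

section
/- Let G be a finite abelian group with |G| ≥ 3 and let H be a proper subgroup of G. Then SD(G) > SD(H). -/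
open Multiset

theorem cmul_one_le_zero_iff {G : Type*} [AddCommMonoid G] (S : Multiset G) :
    cmul 1 S ≤ 0 ↔ S.Nodup := by
  classical
  unfold cmul
  rw [Nat.le_zero, Finset.sum_eq_zero_iff, Multiset.nodup_iff_count_le_one]
  constructor
  · intro h a
    by_cases ha : a ∈ S
    · have := h a (by simpa using ha)
      have h2 : Multiset.count a S - 1 = 0 := by convert this
      omega
    · rw [Multiset.count_eq_zero_of_notMem ha]; omega
  · intro h a _
    have := h a
    have h2 : Multiset.count a S - 1 = 0 := by omega
    convert h2

theorem SD_bddAbove (G : Type*) [AddCommMonoid G] [Finite G] :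
    BddAbove {m | ∃ S : Multiset G, IsMinimalZeroSum S ∧ cmul 1 S ≤ 0 ∧ Multiset.card S = m} := by
  classical
  have := Fintype.ofFinite G
  refine ⟨Fintype.card G, ?_⟩
  rintro m ⟨S, -, hS, rfl⟩
  rw [cmul_one_le_zero_iff] at hS
  exact Finset.card_le_univ (⟨S, hS⟩ : Finset G)

theorem le_SD {G : Type*} [AddCommMonoid G] [Finite G] (S : Multiset G)
    (h : IsMinimalZeroSum S) (hn : S.Nodup) : Multiset.card S ≤ SD G :=
  le_csSup (SD_bddAbove G) ⟨S, h, (cmul_one_le_zero_iff S).2 hn, rfl⟩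

theorem isMinimalZeroSum_zero {G : Type*} [AddCommMonoid G] :
    IsMinimalZeroSum ({0} : Multiset G) := by
  refine ⟨by simp, by simp, fun T hT h0 h1 => ?_⟩
  rcases Multiset.le_singleton.1 hT with h | h
  · exact absurd h h0
  · exact absurd h h1

theorem exists_SD (G : Type*) [AddCommMonoid G] [Finite G] :
    ∃ S : Multiset G, IsMinimalZeroSum S ∧ S.Nodup ∧ Multiset.card S = SD G := by
  have := Nat.sSup_mem (s := {m | ∃ S : Multiset G, IsMinimalZeroSum S ∧ cmul 1 S ≤ 0 ∧
    Multiset.card S = m}) ⟨1, {0}, isMinimalZeroSum_zero,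
      (cmul_one_le_zero_iff _).2 (by simp), by simp⟩ (SD_bddAbove G)
  obtain ⟨S, h1, h2, h3⟩ := this
  exact ⟨S, h1, (cmul_one_le_zero_iff _).1 h2, h3⟩

theorem isMinimalZeroSum_split {G : Type*} [AddCommGroup G] (H : AddSubgroup G)
    (s g : G) (R : Multiset G) (hs : s ∈ H) (hR : ∀ x ∈ R, x ∈ H) (hg : g ∉ H)
    (hS : IsMinimalZeroSum (s ::ₘ R)) : IsMinimalZeroSum (g ::ₘ (s - g) ::ₘ R) := by
  obtain ⟨-, hsum, hmin⟩ := hS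
  have hsub : ∀ T ≤ R, T.sum ∈ H := fun T hT =>
    AddSubgroup.multiset_sum_mem H T fun x hx => hR x (Multiset.mem_of_le hT hx)
  refine ⟨by simp, by simpa [← add_assoc] using hsum, fun T hT h0 h1 h => ?_⟩
  by_cases hgT : g ∈ T
  · obtain ⟨T, rfl⟩ := Multiset.exists_cons_of_mem hgT
    rw [Multiset.cons_le_cons_iff] at hT
    by_cases hu : s - g ∈ T
    · obtain ⟨T, rfl⟩ := Multiset.exists_cons_of_mem hu
      rw [Multiset.cons_le_cons_iff] at hT
      refine hmin (s ::ₘ T) ((Multiset.cons_le_cons_iff s).2 hT) (by simp) ?_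
        (by simpa [← add_assoc] using h)
      intro he
      rw [Multiset.cons_inj_right] at he
      exact h1 (by rw [he])
    · rw [Multiset.le_cons_of_notMem hu] at hT
      rw [Multiset.sum_cons] at h
      exact hg (by rw [eq_neg_of_add_eq_zero_left h]; exact H.neg_mem (hsub T hT))
  · rw [Multiset.le_cons_of_notMem hgT] at hT
    by_cases hu : s - g ∈ T
    · obtain ⟨T, rfl⟩ := Multiset.exists_cons_of_mem hu
      rw [Multiset.cons_le_cons_iff] at hT
      rw [Multiset.sum_cons] at h
      have : g = s + T.sum := by
        rw [← sub_eq_zero, ← neg_eq_zero, ← h]; abel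
      exact hg (by rw [this]; exact H.add_mem hs (hsub T hT))
    · rw [Multiset.le_cons_of_notMem hu] at hT
      refine hmin T (hT.trans (Multiset.le_cons_self _ _)) h0 ?_ h
      rintro rfl
      have := Multiset.card_le_card hT
      simp at this

theorem isMinimalZeroSum_map {G : Type*} [AddCommGroup G] (H : AddSubgroup G)
    (S : Multiset H) (hS : IsMinimalZeroSum S) :
    IsMinimalZeroSum (S.map (Subtype.val : H → G)) := by
  obtain ⟨hne, hsum, hmin⟩ := hS
  have hms : ∀ T : Multiset H, (T.map (Subtype.val : H → G)).sum = (T.sum : G) := fun T =>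
    (map_multiset_sum H.subtype T).symm
  refine ⟨by simpa using hne, by rw [hms, hsum]; rfl, fun T hT h0 h1 h => ?_⟩
  have hTH : ∀ x ∈ T, x ∈ H := fun x hx => by
    obtain ⟨y, _, rfl⟩ := Multiset.mem_map.1 (Multiset.mem_of_le hT hx)
    exact y.2
  lift T to Multiset H using hTH
  rw [Multiset.map_le_map_iff Subtype.val_injective] at hT
  refine hmin T hT (by rintro rfl; simp at h0) (by rintro rfl; exact h1 rfl) ?_
  rw [hms] at h
  exact_mod_cast h

theorem nodup_split {G : Type*} [AddCommGroup G] (H : AddSubgroup G)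
    (s g : G) (R : Multiset G) (hs : s ∈ H) (hR : ∀ x ∈ R, x ∈ H) (hg : g ∉ H)
    (hn : R.Nodup) (h2 : g + g ≠ s) : (g ::ₘ (s - g) ::ₘ R).Nodup := by
  rw [Multiset.nodup_cons, Multiset.nodup_cons, Multiset.mem_cons]
  refine ⟨?_, ?_, hn⟩
  · rintro (h | h)
    · exact h2 (eq_sub_iff_add_eq.1 h)
    · exact hg (hR _ h)
  · intro h
    exact hg (by simpa using H.sub_mem hs (hR _ h))

theorem two_le_SD (G : Type*) [AddCommGroup G] [Fintype G]
    (hG : 3 ≤ Fintype.card G) : 2 ≤ SD G := by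
  classical
  have hsp : ∀ a : G, a ≠ 0 → IsMinimalZeroSum (a ::ₘ (0 - a) ::ₘ (0 : Multiset G)) :=
    fun a ha => isMinimalZeroSum_split ⊥ 0 a 0 (by simp) (by simp) (by simpa using ha)
      isMinimalZeroSum_zero
  by_cases h : ∃ a : G, a + a ≠ 0
  · obtain ⟨a, ha⟩ := h
    have ha0 : a ≠ 0 := by rintro rfl; simp at ha
    have := le_SD _ (hsp a ha0) (nodup_split ⊥ 0 a 0 (by simp) (by simp) (by simpa using ha0)
      (by simp) ha)
    simpa using this
  · push Not at h
    obtain ⟨a, ha⟩ : ∃ a : G, a ∉ ({0} : Finset G) := by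
      by_contra! hc
      have := Finset.card_le_card (fun x _ => hc x : (Finset.univ : Finset G) ⊆ {0})
      simp at this; omega
    obtain ⟨b, hb⟩ : ∃ b : G, b ∉ ({0, a} : Finset G) := by
      by_contra! hc
      have := Finset.card_le_card (fun x _ => hc x : (Finset.univ : Finset G) ⊆ {0, a})
      have h2 := Finset.card_le_two (a := (0 : G)) (b := a)
      simp at this; omega
    simp only [Finset.mem_singleton, Finset.mem_insert, not_or] at ha hb
    have hna : 0 - a = a := by rw [zero_sub]; exact neg_eq_of_add_eq_zero_left (h a)
    have hm := hsp a ha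
    rw [hna] at hm
    let K : AddSubgroup G :=
      { carrier := {0, a}
        zero_mem' := by simp
        add_mem' := by
          rintro x y (rfl | rfl) (rfl | rfl) <;> simp [h]
        neg_mem' := by
          rintro x (rfl | rfl)
          · simp
          · right; rw [← zero_sub]; exact hna }
    have haK : a ∈ K := Or.inr rfl
    have hbK : b ∉ K := by rintro (h | h); exacts [hb.1 h, hb.2 h]
    have hR : ∀ x ∈ (a ::ₘ (0 : Multiset G)), x ∈ K := by
      intro x hx
      have : x = a := by simpa using hx
      rw [this]; exact haK
    have := le_SD _ (isMinimalZeroSum_split K a b _ haK hR hbK hm)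
      (nodup_split K a b _ haK hR hbK (by simp) (by rw [h b]; exact Ne.symm ha))
    simp at this
    omega

/-- If `G` is a finite abelian group with `|G| ≥ 3` and `H` is a proper
subgroup of `G`, then `SD(G) > SD(H)`. -/
theorem strong_davenport_strict_mono (G : Type*) [AddCommGroup G] [Fintype G]
    (hG : 3 ≤ Fintype.card G) (H : AddSubgroup G) (hH : H ≠ ⊤) :
    SD H < SD G := by
  classical
  obtain ⟨S, hS, hn, hc⟩ := exists_SD H
  by_cases h1 : SD H ≤ 1
  · exact lt_of_le_of_lt h1 (two_le_SD G hG)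
  obtain ⟨g, hg⟩ : ∃ g, g ∉ H := by
    by_contra! hc
    exact hH ((AddSubgroup.eq_top_iff' H).2 hc)
  have hn' : (S.map (Subtype.val : H → G)).Nodup := hn.map Subtype.val_injective
  have hm := isMinimalZeroSum_map H S hS
  have hmem : ∀ x ∈ S.map (Subtype.val : H → G), x ∈ H := fun x hx => by
    obtain ⟨y, _, rfl⟩ := Multiset.mem_map.1 hx
    exact y.2
  have hc' : Multiset.card (S.map (Subtype.val : H → G)) = SD H := by simpa using hc
  generalize S.map (Subtype.val : H → G) = U at hn' hm hmem hc'
  obtain ⟨s, hsU, hs⟩ : ∃ s ∈ U, g + g ≠ s := by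
    by_contra! hcon
    have hle : U ≤ {g + g} := (Multiset.le_iff_subset hn').2 fun x hx => by
      simp [hcon x hx]
    have := Multiset.card_le_card hle
    simp at this
    omega
  obtain ⟨R, rfl⟩ := Multiset.exists_cons_of_mem hsU
  have hsH := hmem s hsU
  have hR : ∀ x ∈ R, x ∈ H := fun x hx => hmem x (Multiset.mem_cons_of_mem hx)
  have := le_SD _ (isMinimalZeroSum_split H s g R hsH hR hg hm)
    (nodup_split H s g R hsH hR hg (Multiset.nodup_cons.1 hn').2 hs)
  simp at this hc'
  omega
end

section
/- Let H be a finite abelian group, k ∈ ℕ₀, and n ∈ ℕ with n ≥ 2. Then for each m ∈ [1, n], setting δ = max{0, m − |H| + 1}, one has SD_{k+δ}(H ⊕ C_n) ≥ SD_{k+1}(H) + m − 1. In particular, SD_k(C_n ⊕ C_n) ≥ SD_{k+1}(C_n) + n − 2. -/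
open Multiset

section distinct
variable {H : Type*} [AddCommGroup H] [Fintype H] [DecidableEq H]

lemma swap_period {n : ℕ} {g : H} (hP : ¬ ∃ A : Finset H, A.card = n ∧ ∑ x ∈ A, x = g)
    (A : Finset H) (hA : A.card = n) (d : H) (hd : d = g - ∑ x ∈ A, x) :
    ∀ a ∈ A, a + d ∈ A := by
  intro a ha
  by_contra hb
  apply hP
  have hb' : a + d ∉ A.erase a := fun h => hb (Finset.mem_of_mem_erase h)
  refine ⟨insert (a + d) (A.erase a), ?_, ?_⟩
  · rw [Finset.card_insert_of_notMem hb', Finset.card_erase_add_one ha, hA]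
  · rw [Finset.sum_insert hb']
    have := Finset.add_sum_erase A (fun x => x) ha
    rw [hd, ← this]; abel

lemma closed_sub (A : Finset H) (d : H) (h : ∀ a ∈ A, a + d ∈ A) : ∀ a ∈ A, a - d ∈ A := by
  have himg : A.image (· + d) = A := by
    apply Finset.eq_of_subset_of_card_le
    · intro x hx
      obtain ⟨a, ha, rfl⟩ := Finset.mem_image.1 hx
      exact h a ha
    · rw [Finset.card_image_of_injective _ (add_left_injective d)]
  intro a ha
  rw [← himg] at ha
  obtain ⟨b, hb, rfl⟩ := Finset.mem_image.1 ha
  simpa using hb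

lemma swap_contra (A : Finset H) (a b d : H) (ha : a ∈ A) (hb : b ∉ A)
    (hd : d + d ≠ 0) (hA : ∀ x ∈ A, x + d ∈ A)
    (hA' : ∀ x ∈ insert b (A.erase a), x + (d + a - b) ∈ insert b (A.erase a)) : False := by
  have h1 : a + d + d ∈ A := hA _ (hA _ ha)
  have h2 : a + d + d ∈ insert b (A.erase a) := by
    apply Finset.mem_insert_of_mem
    apply Finset.mem_erase_of_ne_of_mem _ h1
    intro h
    apply hd
    rw [add_assoc] at h
    simpa using h
  have h3 := closed_sub _ _ hA' _ h2
  have h4 : a + d + d - (d + a - b) = b + d := by abel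
  rw [h4, Finset.mem_insert] at h3
  have h5 : b + d ∈ A := by
    rcases h3 with h3 | h3
    · exfalso; apply hd
      have : d = 0 := by simpa using h3
      simp [this]
    · exact Finset.mem_of_mem_erase h3
  have := closed_sub A d hA _ h5
  simp at this
  exact hb this

lemma distinct_nontorsion (n : ℕ) (hn : 1 ≤ n) (hn' : n < Fintype.card H) (g u : H)
    (hu : u + u ≠ 0) : ∃ A : Finset H, A.card = n ∧ ∑ x ∈ A, x = g := by
  by_contra hP
  have hu0 : (0:H) ≠ u := by rintro rfl; simp at hu
  obtain ⟨B, hB, hBc⟩ := Finset.exists_subset_card_eq (s := (Finset.univ \ {0, u} : Finset H))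
    (n := n - 1) (by
      rw [Finset.card_sdiff_of_subset (Finset.subset_univ _), Finset.card_pair hu0,
        Finset.card_univ]; omega)
  have h0B : (0:H) ∉ B := fun h => by simpa using hB h
  have huB : u ∉ B := fun h => by simpa using hB h
  have c1 : (insert 0 B).card = n := by rw [Finset.card_insert_of_notMem h0B]; omega
  have c2 : (insert u B).card = n := by rw [Finset.card_insert_of_notMem huB]; omega
  have p1 := swap_period hP _ c1 _ rfl
  have p2 := swap_period hP _ c2 _ rfl
  rw [Finset.sum_insert h0B] at p1
  rw [Finset.sum_insert huB] at p2
  set s := ∑ x ∈ B, x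
  have e1 : (insert 0 B).erase 0 = B := Finset.erase_insert h0B
  have e2 : (insert u B).erase u = B := Finset.erase_insert huB
  by_cases hd : (g - (0 + s)) + (g - (0 + s)) = 0
  · apply swap_contra (insert u B) u 0 (g - (u + s)) (by simp) (by simp [h0B, hu0]) _ p2
    · rw [e2]
      convert p1 using 4
      abel
    · intro h
      apply hu
      have : u + u = ((g - (0 + s)) + (g - (0 + s))) - ((g - (u + s)) + (g - (u + s))) := by abel
      rw [this, hd, h, sub_zero]
  · apply swap_contra (insert 0 B) 0 u (g - (0 + s)) (by simp) (by simp [huB, hu0.symm]) hd p1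
    rw [e1]
    convert p2 using 4
    abel

lemma distinct_half (ht : ∀ x : H, x + x = 0) (n : ℕ) (hn : 2 ≤ n) (hn' : 2 * n ≤ Fintype.card H)
    (g : H) (hg : g ≠ 0) : ∃ A : Finset H, A.card = n ∧ ∑ x ∈ A, x = g := by
  have hB : ∃ B : Finset H, B.card = n - 2 ∧ ∑ x ∈ B, x ≠ g := by
    rcases eq_or_lt_of_le hn with rfl | hn3
    · exact ⟨∅, by simp, by simpa using hg.symm⟩
    · obtain ⟨C, -, hC⟩ := Finset.exists_subset_card_eq (s := (Finset.univ : Finset H))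
        (n := n - 1) (by rw [Finset.card_univ]; omega)
      obtain ⟨c, hc, c', hc', hne⟩ := Finset.one_lt_card.1 (by omega : 1 < C.card)
      have s1 := Finset.add_sum_erase C (fun x => x) hc
      have s2 := Finset.add_sum_erase C (fun x => x) hc'
      by_cases h : ∑ x ∈ C.erase c, x = g
      · refine ⟨C.erase c', by rw [Finset.card_erase_of_mem hc']; omega, fun h' => hne ?_⟩
        rw [h] at s1; rw [h', ← s1] at s2
        exact (add_right_cancel s2).symm
      · exact ⟨C.erase c, by rw [Finset.card_erase_of_mem hc]; omega, h⟩
  obtain ⟨B, hBc, hBs⟩ := hB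
  set d := g - ∑ x ∈ B, x with hd
  have hd0 : d ≠ 0 := fun h => hBs (sub_eq_zero.1 h).symm
  obtain ⟨x, hx⟩ : ∃ x, x ∉ B ∪ B.image (· + d) := by
    by_contra! h
    have h1 : (B ∪ B.image (· + d)) = Finset.univ := Finset.eq_univ_iff_forall.2 h
    have h2 := Finset.card_union_le B (B.image (· + d))
    have h3 : (B.image (· + d)).card ≤ B.card := Finset.card_image_le
    rw [h1, Finset.card_univ] at h2
    omega
  rw [Finset.mem_union, not_or] at hx
  have hx2 : x + d ∉ B := by
    intro h
    apply hx.2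
    refine Finset.mem_image.2 ⟨_, h, ?_⟩
    simp [add_assoc, ht]
  have hx3 : x ∉ insert (x + d) B := by
    rw [Finset.mem_insert, not_or]
    exact ⟨by simpa using hd0, hx.1⟩
  refine ⟨insert x (insert (x + d) B), ?_, ?_⟩
  · rw [Finset.card_insert_of_notMem hx3, Finset.card_insert_of_notMem hx2]; omega
  · rw [Finset.sum_insert hx3, Finset.sum_insert hx2, ← add_assoc, ← add_assoc, ht, hd]; abel

lemma sum_univ_zero (ht : ∀ x : H, x + x = 0) (hc : 3 ≤ Fintype.card H) :
    ∑ x : H, x = 0 := by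
  letI : Module (ZMod 2) H := AddCommGroup.zmodModule (n := 2) (by intro x; rw [two_nsmul, ht])
  rw [← Module.forall_dual_apply_eq_zero_iff (ZMod 2)]
  intro f
  obtain ⟨w, hw, hfw⟩ : ∃ w : H, w ≠ 0 ∧ f w = 0 := by
    obtain ⟨u, hu⟩ : ∃ u : H, u ∉ ({0} : Finset H) := by
      by_contra! h
      have := Finset.card_le_card (fun x _ => h x : (Finset.univ : Finset H) ⊆ {0})
      simp at this; omega
    obtain ⟨v, hv⟩ : ∃ v : H, v ∉ ({0, u} : Finset H) := by
      by_contra! h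
      have := Finset.card_le_card (fun x _ => h x : (Finset.univ : Finset H) ⊆ {0, u})
      have h2 := Finset.card_le_two (a := (0:H)) (b := u)
      simp only [Finset.card_univ] at this; omega
    simp only [Finset.mem_singleton, Finset.mem_insert, not_or] at hu hv
    by_cases h1 : f u = 0
    · exact ⟨u, hu, h1⟩
    by_cases h2 : f v = 0
    · exact ⟨v, hv.1, h2⟩
    refine ⟨u + v, ?_, ?_⟩
    · intro h
      apply hv.2
      have : v = (u + v) - u := by abel
      rw [this, h, zero_sub, neg_eq_iff_add_eq_zero, ht]
    · rw [_root_.map_add]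
      generalize f u = p at *
      generalize f v = q at *
      revert p q; decide
  rw [_root_.map_sum]
  refine Finset.sum_involution (fun x _ => x + w) ?_ ?_ ?_ ?_
  · intro x _
    rw [_root_.map_add, hfw, add_zero, ← _root_.map_add, ht, _root_.map_zero]
  · intro x _ _; simpa using hw
  · intro x _; simp
  · intro x _; simp [add_assoc, ht]

lemma distinct_sum (n : ℕ) (hn : 2 ≤ n) (hn' : n < Fintype.card H) (g : H) (hg : g ≠ 0) :
    ∃ A : Finset H, A.card = n ∧ ∑ x ∈ A, x = g := by
  by_cases ht : ∀ x : H, x + x = 0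
  · by_cases h2 : 2 * n ≤ Fintype.card H
    · exact distinct_half ht n hn h2 g hg
    · have hs := sum_univ_zero ht (by omega)
      have hB : ∃ B : Finset H, B.card = Fintype.card H - n ∧ ∑ x ∈ B, x = g := by
        by_cases h1 : Fintype.card H - n = 1
        · exact ⟨{g}, by simp [h1], by simp⟩
        · exact distinct_half ht _ (by omega) (by omega) g hg
      obtain ⟨B, hB, hBs⟩ := hB
      refine ⟨Bᶜ, by rw [Finset.card_compl]; omega, ?_⟩
      have := Finset.sum_add_sum_compl B (fun x => x)
      rw [hs, hBs] at this
      rw [← neg_eq_of_add_eq_zero_right this, neg_eq_iff_add_eq_zero, ht]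
  · push Not at ht
    obtain ⟨u, hu⟩ := ht
    exact distinct_nontorsion n (by omega) hn' g u hu

end distinct

section partB
variable {G : Type*} [AddCommGroup G]

lemma cm_eq [DecidableEq G] (S : Multiset G) :
    cmul 1 S + S.toFinset.card = Multiset.card S := by
  have h : ‹DecidableEq G› = Classical.decEq G := Subsingleton.elim _ _
  subst h
  letI := Classical.decEq G
  unfold cmul
  rw [Finset.card_eq_sum_ones, ← Finset.sum_add_distrib, ← Multiset.toFinset_sum_count_eq S]
  apply Finset.sum_congr rfl
  intro x hx
  have := Multiset.one_le_count_iff_mem.2 (Multiset.mem_toFinset.1 hx)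
  omega

lemma cm_le_card (S : Multiset G) : cmul 1 S ≤ Multiset.card S := by
  classical
  have := cm_eq S
  omega

lemma bdd_SDk [Fintype G] (k : ℕ) :
    BddAbove {m | ∃ S : Multiset G, IsMinimalZeroSum S ∧ cmul 1 S ≤ k ∧ Multiset.card S = m} := by
  classical
  refine ⟨k + Fintype.card G, ?_⟩
  rintro m ⟨S, -, h, rfl⟩
  have h1 := cm_eq S
  have h2 := Finset.card_le_univ S.toFinset
  omega

lemma le_SDk [Fintype G] (k : ℕ) (S : Multiset G) (hS : IsMinimalZeroSum S)
    (h : cmul 1 S ≤ k) : Multiset.card S ≤ SDk G k :=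
  le_csSup (bdd_SDk k) ⟨S, hS, h, rfl⟩

lemma min_singleton_zero : IsMinimalZeroSum ({0} : Multiset G) := by
  refine ⟨by simp, by simp, ?_⟩
  intro T hT h0 h1
  rcases Multiset.le_singleton.1 hT with h | h
  · exact absurd h h0
  · exact absurd h h1

lemma exists_SDk [Fintype G] (k : ℕ) :
    ∃ S : Multiset G, IsMinimalZeroSum S ∧ cmul 1 S ≤ k ∧ Multiset.card S = SDk G k := by
  classical
  apply Nat.sSup_mem _ (bdd_SDk k)
  refine ⟨1, {0}, min_singleton_zero, ?_, by simp⟩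
  have := cm_eq ({0} : Multiset G)
  simp at this
  omega

lemma min_eq_zero_of_mem {S : Multiset G} (hS : IsMinimalZeroSum S) (h : (0:G) ∈ S) :
    S = {0} := by
  by_contra hne
  exact hS.2.2 {0} (Multiset.singleton_le.2 h) (by simp) (Ne.symm hne) (by simp)

lemma two_le_SDk [Fintype G] (k : ℕ) (hG : 2 ≤ Fintype.card G) : 2 ≤ SDk G (k + 1) := by
  classical
  obtain ⟨h, hh⟩ := Fintype.exists_ne_of_one_lt_card hG (0:G)
  have hm : IsMinimalZeroSum ({h, -h} : Multiset G) := by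
    refine ⟨by simp, by simp, ?_⟩
    intro T hT h0 h1 hs
    have hlt := Multiset.card_lt_card (lt_of_le_of_ne hT h1)
    have hpos := Multiset.card_pos.2 h0
    simp at hlt
    obtain ⟨a, rfl⟩ := Multiset.card_eq_one.1 (by omega : Multiset.card T = 1)
    have ha : a ∈ ({h, -h} : Multiset G) := Multiset.singleton_le.1 hT
    simp at ha hs
    rcases ha with ha | ha
    · exact hh (ha ▸ hs)
    · apply hh; rw [hs] at ha; simpa using ha.symm
  have := le_SDk (k + 1) _ hm (by
    have h1 := cm_eq ({h, -h} : Multiset G)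
    have h2 : 0 < (({h, -h} : Multiset G).toFinset).card := Finset.card_pos.2 ⟨h, by simp⟩
    have h3 : Multiset.card ({h, -h} : Multiset G) = 2 := by simp
    omega)
  simpa using this

lemma exists_remove (k : ℕ) (S : Multiset G) (h0 : S ≠ 0) (h : cmul 1 S ≤ k + 1) :
    ∃ g T, S = g ::ₘ T ∧ cmul 1 T ≤ k := by
  classical
  by_cases hn : S.Nodup
  · obtain ⟨g, hg⟩ := Multiset.exists_mem_of_ne_zero h0
    obtain ⟨T, rfl⟩ := Multiset.exists_cons_of_mem hg
    refine ⟨g, T, rfl, ?_⟩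
    have h1 := cm_eq T
    have h2 := Multiset.toFinset_card_of_nodup (Multiset.nodup_cons.1 hn).2
    omega
  · rw [Multiset.nodup_iff_ne_cons_cons] at hn
    push Not at hn
    obtain ⟨g, T, rfl⟩ := hn
    refine ⟨g, g ::ₘ T, rfl, ?_⟩
    have h1 := cm_eq (g ::ₘ T)
    have h2 := cm_eq (g ::ₘ g ::ₘ T)
    have h3 : (g ::ₘ g ::ₘ T).toFinset = (g ::ₘ T).toFinset := by ext; simp
    rw [h3, Multiset.card_cons g (g ::ₘ T)] at h2
    omega

variable {K : Type*} [AddCommGroup K]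

lemma snd_sum_aux (W : Multiset (G × K)) : W.sum.2 = (W.map Prod.snd).sum :=
  _root_.map_multiset_sum (AddMonoidHom.snd G K) W

lemma fst_sum_aux (W : Multiset (G × K)) : W.sum.1 = (W.map Prod.fst).sum :=
  _root_.map_multiset_sum (AddMonoidHom.fst G K) W

lemma key (T : Multiset G) (g : G) (hT : IsMinimalZeroSum (g ::ₘ T)) (W : Multiset (G × K))
    (hW2 : IsMinimalZeroSum (W.map Prod.snd)) (hW1 : (W.map Prod.fst).sum = g) :
    IsMinimalZeroSum (T.map (fun h => (h, (0:K))) + W) := by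
  classical
  have hTs : g + T.sum = 0 := by simpa using hT.2.1
  have hfT : (T.map (fun h => (h, (0:K)))).map Prod.fst = T := by simp
  have hW0 : W ≠ 0 := by
    rintro rfl
    exact hW2.1 (by simp)
  refine ⟨?_, ?_, ?_⟩
  · intro h
    apply hW0
    exact (add_eq_zero.1 h).2
  · apply Prod.ext
    · rw [fst_sum_aux, Multiset.map_add, hfT, Multiset.sum_add, hW1, add_comm, hTs]; rfl
    · rw [snd_sum_aux, Multiset.map_add, Multiset.sum_add, hW2.2.1]
      simp
  · intro U hU hU0 hU1 hUs
    set F := T.map (fun h => (h, (0:K))) with hF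
    obtain ⟨U1, U2, h1, h2, rfl⟩ : ∃ U1 U2, U1 ≤ F ∧ U2 ≤ W ∧ U = U1 + U2 :=
      ⟨U - W, U ∩ W, by rw [Multiset.sub_le_iff_le_add]; exact hU, Multiset.inter_le_right,
        (Multiset.sub_add_inter U W).symm⟩
    have hT1 : U1.map Prod.fst ≤ T := by
      have := Multiset.map_le_map (f := Prod.fst) h1
      rwa [hfT] at this
    have hz : (U1.map Prod.snd).sum = 0 := by
      apply Multiset.sum_eq_zero
      intro x hx
      obtain ⟨y, hy, rfl⟩ := Multiset.mem_map.1 hx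
      obtain ⟨z, -, rfl⟩ := Multiset.mem_map.1 (Multiset.mem_of_le h1 hy)
      rfl
    have hs2 : (U2.map Prod.snd).sum = 0 := by
      have := congrArg Prod.snd hUs
      rw [snd_sum_aux, Multiset.map_add, Multiset.sum_add, hz, zero_add] at this
      exact this
    have hs1 : (U1.map Prod.fst).sum + (U2.map Prod.fst).sum = 0 := by
      have := congrArg Prod.fst hUs
      rw [fst_sum_aux, Multiset.map_add, Multiset.sum_add] at this
      exact this
    by_cases c0 : U2 = 0
    · subst c0
      apply hT.2.2 (U1.map Prod.fst) (hT1.trans (Multiset.le_cons_self _ _))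
      · intro h
        apply hU0
        simpa using h
      · intro h
        have := Multiset.card_le_card hT1
        rw [h] at this
        simp at this
      · simpa using hs1
    · by_cases cW : U2.map Prod.snd = W.map Prod.snd
      · have e2 : U2 = W := by
          apply Multiset.eq_of_le_of_card_le h2
          have := congrArg Multiset.card cW
          simp at this
          exact this.ge
        subst e2
        rw [hW1] at hs1
        apply hT.2.2 (g ::ₘ U1.map Prod.fst) (Multiset.cons_le_cons _ hT1) (by simp)
        · intro h
          apply hU1
          congr 1
          apply Multiset.eq_of_le_of_card_le h1
          have := congrArg Multiset.card h
          simp at this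
          simp [hF, this]
        · rw [Multiset.sum_cons, add_comm, hs1]
      · exact hW2.2.2 _ (Multiset.map_le_map h2) (by simpa using c0) cW hs2

lemma key_SDk [Fintype G] [Fintype K] (T : Multiset G) (g : G) (hT : IsMinimalZeroSum (g ::ₘ T))
    (W : Multiset (G × K)) (hW2 : IsMinimalZeroSum (W.map Prod.snd))
    (hW1 : (W.map Prod.fst).sum = g) (hc : 2 ≤ Multiset.card W) (k δ : ℕ)
    (hk : cmul 1 T ≤ k) (hδ : cmul 1 W ≤ δ) :
    Multiset.card T + Multiset.card W ≤ SDk (G × K) (k + δ) := by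
  classical
  have := le_SDk (k + δ) _ (key T g hT W hW2 hW1) ?_
  · simpa using this
  · have h1 := cm_eq (T.map (fun h => (h, (0:K))) + W)
    have h2 := cm_eq T
    have h3 := cm_eq W
    have hinj : Function.Injective (fun h : G => (h, (0:K))) := fun a b h => by simpa using h
    have hdis : Disjoint (T.map (fun h => (h, (0:K)))).toFinset W.toFinset := by
      rw [Finset.disjoint_left]
      intro x hx hxW
      simp only [Multiset.mem_toFinset, Multiset.mem_map] at hx hxW
      obtain ⟨a, -, rfl⟩ := hx
      have hm : (0:K) ∈ W.map Prod.snd := Multiset.mem_map.2 ⟨_, hxW, rfl⟩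
      have := congrArg Multiset.card (min_eq_zero_of_mem hW2 hm)
      simp at this
      omega
    rw [Multiset.toFinset_add, Finset.card_union_of_disjoint hdis, Multiset.toFinset_map,
      Finset.card_image_of_injective _ hinj, Multiset.card_add, Multiset.card_map] at h1
    omega

lemma min_cyclic (n m : ℕ) (hm1 : 1 ≤ m) (hmn : m ≤ n) :
    IsMinimalZeroSum ((1 - (m : ZMod n)) ::ₘ Multiset.replicate (m - 1) (1 : ZMod n)) := by
  have hcast : ((m - 1 : ℕ) : ZMod n) = (m : ZMod n) - 1 := by
    rw [Nat.cast_sub hm1, Nat.cast_one]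
  refine ⟨by simp, by simp [hcast], ?_⟩
  intro U hU h0 h1 hs
  by_cases hc : (1 - (m : ZMod n)) ∈ U
  · obtain ⟨V, rfl⟩ := Multiset.exists_cons_of_mem hc
    rw [Multiset.cons_le_cons_iff, Multiset.le_replicate_iff] at hU
    obtain ⟨j, hj, rfl⟩ := hU
    apply h1
    simp only [Multiset.sum_cons, Multiset.sum_replicate, nsmul_eq_mul, mul_one] at hs
    have h2 : ((m - 1 - j : ℕ) : ZMod n) = 0 := by
      rw [Nat.cast_sub hj, hcast, ← neg_eq_zero, ← hs]; ring
    rw [ZMod.natCast_eq_zero_iff] at h2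
    have := Nat.eq_zero_of_dvd_of_lt h2 (by omega)
    rw [show j = m - 1 by omega]
  · rw [Multiset.le_cons_of_notMem hc, Multiset.le_replicate_iff] at hU
    obtain ⟨j, hj, rfl⟩ := hU
    simp only [Multiset.sum_replicate, nsmul_eq_mul, mul_one] at hs
    rw [ZMod.natCast_eq_zero_iff] at hs
    have := Nat.eq_zero_of_dvd_of_lt hs (by omega)
    subst this
    exact h0 (by simp)

lemma exists_W [Fintype G] (n m : ℕ) (hm1 : 2 ≤ m) (hmn : m ≤ n) (g : G) (hg : g ≠ 0) :
    ∃ W : Multiset (G × ZMod n), Multiset.card W = m ∧ (W.map Prod.fst).sum = g ∧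
      W.map Prod.snd = (1 - (m : ZMod n)) ::ₘ Multiset.replicate (m - 1) (1 : ZMod n) ∧
      cmul 1 W ≤ m + 1 - Fintype.card G := by
  classical
  by_cases hc : m = n ∧ n < Fintype.card G
  · obtain ⟨rfl, hc⟩ := hc
    obtain ⟨A, hA, hAs⟩ := distinct_sum m hm1 hc g hg
    have hnd : (A.val.map (fun h => (h, (1 : ZMod m)))).Nodup :=
      A.nodup.map (fun a b h => by simpa using h)
    refine ⟨A.val.map (fun h => (h, 1)), by simp [hA], ?_, ?_, ?_⟩
    · rw [Multiset.map_map, ← hAs]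
      rfl
    · rw [Multiset.map_map]
      have e : (Prod.snd ∘ fun h : G => (h, (1 : ZMod m))) = Function.const G 1 := rfl
      rw [e, Multiset.map_const, Finset.card_val, hA, ZMod.natCast_self, sub_zero, ← Multiset.replicate_succ]
      congr 1
      omega
    · have h1 := cm_eq (A.val.map (fun h => (h, (1 : ZMod m))))
      rw [Multiset.toFinset_card_of_nodup hnd] at h1
      omega
  · obtain ⟨A, -, hA⟩ := Finset.exists_subset_card_eq (s := (Finset.univ : Finset G))
      (n := min (m - 1) (Fintype.card G)) (by simp)
    set L : Multiset G := A.val + Multiset.replicate (m - 1 - A.card) 0 with hL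
    have hLc : Multiset.card L = m - 1 := by simp [hL]; omega
    have hinj : Function.Injective (fun h : G => (h, (1 : ZMod n))) := fun a b h => by simpa using h
    set W : Multiset (G × ZMod n) :=
      (g - L.sum, 1 - (m : ZMod n)) ::ₘ L.map (fun h => (h, (1 : ZMod n))) with hW
    have hWc : Multiset.card W = m := by simp [hW, hLc]; omega
    have hcm := cm_eq W
    have hsub : A.image (fun h => (h, (1 : ZMod n))) ⊆ W.toFinset := by
      intro x hx
      obtain ⟨a, ha, rfl⟩ := Finset.mem_image.1 hx
      rw [Multiset.mem_toFinset, hW]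
      apply Multiset.mem_cons_of_mem
      apply Multiset.mem_map_of_mem
      rw [hL]
      exact Multiset.mem_add.2 (Or.inl ha)
    refine ⟨W, hWc, ?_, ?_, ?_⟩
    · simp [hW]
    · simp [hW, hLc]
    · by_cases hmn' : m = n
      · have h1 := Finset.card_le_card hsub
        rw [Finset.card_image_of_injective _ hinj] at h1
        omega
      · have hni : (g - L.sum, 1 - (m : ZMod n)) ∉ A.image (fun h => (h, (1 : ZMod n))) := by
          intro h
          obtain ⟨a, -, h⟩ := Finset.mem_image.1 h
          have h2 : (1 : ZMod n) = 1 - (m : ZMod n) := congrArg Prod.snd h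
          have h3 : (m : ZMod n) = 0 := by
            rw [eq_comm, sub_eq_self] at h2
            exact h2
          rw [ZMod.natCast_eq_zero_iff] at h3
          have := Nat.eq_zero_of_dvd_of_lt h3 (by omega)
          omega
        have h1 := Finset.card_le_card (Finset.insert_subset
          (by simp [hW] : (g - L.sum, 1 - (m : ZMod n)) ∈ W.toFinset) hsub)
        rw [Finset.card_insert_of_notMem hni, Finset.card_image_of_injective _ hinj] at h1
        omega

lemma part_one [Fintype G] (k n : ℕ) (hn : 2 ≤ n) (m : ℕ) (hm1 : 1 ≤ m) (hmn : m ≤ n) :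
    SDk G (k + 1) + (m - 1) ≤ SDk (G × ZMod n) (k + (m + 1 - Fintype.card G)) := by
  classical
  haveI : NeZero n := ⟨by omega⟩
  obtain ⟨S, hS, hSk, hSc⟩ := exists_SDk (G := G) (k + 1)
  obtain ⟨g, T, rfl, hTk⟩ := exists_remove k S hS.1 hSk
  rw [← hSc, Multiset.card_cons]
  by_cases hG : 2 ≤ Fintype.card G
  · have h2 := two_le_SDk (G := G) k hG
    have hg : g ≠ 0 := by
      rintro rfl
      have := congrArg Multiset.card (min_eq_zero_of_mem hS (by simp))
      rw [hSc] at this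
      simp at this
      omega
    by_cases hm : m = 1
    · subst hm
      have hmin := min_cyclic n 2 (by omega) hn
      have := key_SDk T g hS
        ({(0, 1 - ((2:ℕ) : ZMod n)), (g, 1)} : Multiset (G × ZMod n))
        (by simpa using hmin) (by simp) (by simp) k (1 + 1 - Fintype.card G) hTk (by
          have h1 := cm_eq ({(0, 1 - ((2:ℕ) : ZMod n)), (g, 1)} : Multiset (G × ZMod n))
          rw [Multiset.toFinset_card_of_nodup (by
            simp only [Multiset.insert_eq_cons, Multiset.nodup_cons, Multiset.mem_singleton,
              Multiset.nodup_singleton, and_true]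
            intro h
            exact hg (congrArg Prod.fst h).symm)] at h1
          omega)
      simp at this ⊢
      omega
    · obtain ⟨W, hWc, hW1, hW2, hWk⟩ := exists_W n m (by omega) hmn g hg
      have := key_SDk T g hS W (hW2 ▸ min_cyclic n m hm1 hmn) hW1 (by omega) k _ hTk hWk
      omega
  · have hpos : 0 < Fintype.card G := Fintype.card_pos
    haveI : Subsingleton G := Fintype.card_le_one_iff_subsingleton.1 (by omega)
    have hT : Multiset.card T = 0 := by
      have := congrArg Multiset.card (min_eq_zero_of_mem hS (by simp [Subsingleton.elim g 0]))
      simpa using this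
    have hk := key T g hS
      ((0, 1 - (m : ZMod n)) ::ₘ Multiset.replicate (m - 1) (0, (1 : ZMod n)))
      (by simpa using min_cyclic n m hm1 hmn) (Subsingleton.elim _ _)
    have hc := cm_le_card (T.map (fun h => (h, (0:ZMod n))) +
      ((0, 1 - (m : ZMod n)) ::ₘ Multiset.replicate (m - 1) (0, (1 : ZMod n))))
    have := le_SDk (k + (m + 1 - Fintype.card G)) _ hk (hc.trans (by simp [hT]; omega))
    simp at this
    omega

end partB

theorem SDk_prod_cyclic_lower_bound (H : Type*) [AddCommGroup H] [Fintype H]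
    (k n : ℕ) (hn : 2 ≤ n) (m : ℕ) (hm1 : 1 ≤ m) (hmn : m ≤ n) :
    SDk H (k + 1) + (m - 1) ≤ SDk (H × ZMod n) (k + (m + 1 - Fintype.card H)) ∧
    SDk (ZMod n) (k + 1) + (n - 2) ≤ SDk (ZMod n × ZMod n) k := by
  refine ⟨part_one k n hn m hm1 hmn, ?_⟩
  haveI : NeZero n := ⟨by omega⟩
  have := part_one (G := ZMod n) k n hn (n - 1) (by omega) (by omega)
  rw [ZMod.card, show n - 1 + 1 - n = 0 by omega, show n - 1 - 1 = n - 2 by omega] at this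
  exact this
end
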